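/- Let F be a finite field of characteristic 2 with q = 2^n elements, and let G = C_2^5 be the elementary abelian group of order 32. Then the unit group of the group algebra FG is isomorphic to C_2^{31n} × C_{2^n - 1}. -/

import Mathlib

/-- The cyclic group of order `m`, realized as `Multiplicative (ZMod m)`. -/
abbrev C (m : ℕ) : Type := Multiplicative (ZMod m)

abbrev G5 : Type := C 2 × C 2 × C 2 × C 2 × C 2

theorem elem_ab (V : Type*) [CommGroup V] [Finite V] (m : ℕ) (h2 : ∀ v : V, v ^ 2 = 1)
    (hc : Nat.card V = 2 ^ m) : Nonempty (V ≃* (Fin m → C 2)) := by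
  have : Fact (Nat.Prime 2) := ⟨Nat.prime_two⟩
  let : Module (ZMod 2) (Additive V) := AddCommGroup.zmodModule (n := 2) (fun x => h2 x.toMul)
  have : Finite (Additive V) := ‹Finite V›
  have : Module.Finite (ZMod 2) (Additive V) := Module.Finite.of_finite
  have hr : Module.finrank (ZMod 2) (Additive V) = m := by
    have h := Module.natCard_eq_pow_finrank (K := ZMod 2) (V := Additive V)
    have h' : Nat.card (Additive V) = 2 ^ m := hc
    rw [h', Nat.card_zmod] at h
    exact (Nat.pow_right_injective le_rfl h).symm
  let e := (Module.finBasisOfFinrankEq (ZMod 2) (Additive V) hr).equivFun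
  exact ⟨{ toFun := fun v i => Multiplicative.ofAdd (e (Additive.ofMul v) i)
           invFun := fun f => (e.symm (fun i => (f i).toAdd)).toMul
           left_inv := fun v => by
             show (e.symm (e (Additive.ofMul v))).toMul = v
             simp
           right_inv := fun f => by
             funext i
             show Multiplicative.ofAdd (e (e.symm (fun i => (f i).toAdd)) i) = f i
             simp
           map_mul' := fun a b => by
             funext i
             show Multiplicative.ofAdd (e (Additive.ofMul a + Additive.ofMul b) i) = _
             rw [map_add]; rfl }⟩

theorem sq_aug (F : Type*) [Field F] [CharP F 2] (ε : MonoidAlgebra F G5 →ₐ[F] F)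
    (hε : ∀ g, ε (MonoidAlgebra.of F G5 g) = 1) (x : MonoidAlgebra F G5) :
    x * x = algebraMap F _ (ε x * ε x) := by
  have : CharP (MonoidAlgebra F G5) 2 := charP_of_injective_algebraMap
    (algebraMap F (MonoidAlgebra F G5)).injective 2
  induction x using MonoidAlgebra.induction_on with
  | of g =>
    rw [hε, ← map_mul]
    have : g * g = 1 := by revert g; decide
    rw [this]; simp
  | add a b ha hb =>
    rw [CharTwo.add_mul_self, ha, hb, map_add, CharTwo.add_mul_self, map_add]
  | smul r a ha =>
    rw [smul_mul_smul_comm, ha, map_smul, Algebra.smul_def, ← map_mul]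
    congr 1
    simp only [smul_eq_mul]; ring

theorem unit_group_stmt_12 (F : Type*) [Field F] [Fintype F] [CharP F 2]
    (n : ℕ) (hn : 0 < n) (hF : Fintype.card F = 2 ^ n) :
    Nonempty ((MonoidAlgebra F (C 2 × C 2 × C 2 × C 2 × C 2))ˣ ≃*
      ((Fin (31 * n) → C 2) × C (2 ^ n - 1))) := by
  let ε : MonoidAlgebra F G5 →ₐ[F] F := MonoidAlgebra.lift F F G5 1
  have hε : ∀ g, ε (MonoidAlgebra.of F G5 g) = 1 := fun g => by simp [ε]
  have hsq := sq_aug F ε hε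
  have hεa : ∀ r : F, ε (algebraMap F _ r) = r := fun r => by
    rw [AlgHom.commutes]; rfl
  have : Module.Finite F (MonoidAlgebra F G5) :=
    Module.Finite.equiv (MonoidAlgebra.coeffLinearEquiv (S := F) (M := G5) F).symm
  have : Finite (MonoidAlgebra F G5) := Module.finite_of_finite F
  let φ : (MonoidAlgebra F G5)ˣ →* Fˣ := Units.map (ε : MonoidAlgebra F G5 →* F)
  let ι : Fˣ →* (MonoidAlgebra F G5)ˣ :=
    Units.map (algebraMap F (MonoidAlgebra F G5) : F →* MonoidAlgebra F G5)
  have hφι : ∀ r, φ (ι r) = r := fun r => Units.ext (hεa r)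
  let e1 : (MonoidAlgebra F G5)ˣ ≃* φ.ker × Fˣ :=
    { toFun := fun u => (⟨u * (ι (φ u))⁻¹, by
        rw [MonoidHom.mem_ker, map_mul, map_inv, hφι, mul_inv_cancel]⟩, φ u)
      invFun := fun p => p.1 * ι p.2
      left_inv := fun u => by simp
      right_inv := fun p => by
        obtain ⟨⟨v, hv⟩, r⟩ := p
        rw [MonoidHom.mem_ker] at hv
        have : φ (v * ι r) = r := by rw [map_mul, hv, hφι, one_mul]
        ext1
        · apply Subtype.ext
          show v * ι r * (ι (φ (v * ι r)))⁻¹ = v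
          rw [this]; simp
        · exact this
      map_mul' := fun a b => by
        ext1
        · apply Subtype.ext
          show a * b * (ι (φ (a * b)))⁻¹ = (a * (ι (φ a))⁻¹) * (b * (ι (φ b))⁻¹)
          rw [map_mul, map_mul, mul_inv]
          exact mul_mul_mul_comm _ _ _ _
        · exact map_mul φ a b }
  have hεker : ∀ v : φ.ker, ε (v : (MonoidAlgebra F G5)ˣ).1 = 1 := fun v =>
    congrArg Units.val (MonoidHom.mem_ker.1 v.2)
  have hV2 : ∀ v : φ.ker, v ^ 2 = 1 := fun v => by
    apply Subtype.ext
    apply Units.ext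
    show (v : (MonoidAlgebra F G5)ˣ).1 ^ 2 = 1
    rw [sq, hsq, hεker, mul_one, map_one]
  have hcard : Nat.card φ.ker = 2 ^ (31 * n) := by
    let K := LinearMap.ker ε.toLinearMap
    have h1 : ∀ x : K, (1 + x.1) * (1 + x.1) = 1 := fun x => by
      have : ε x.1 = 0 := x.2
      rw [hsq, map_add, this, map_one, add_zero, mul_one, map_one]
    let e : φ.ker ≃ K :=
      { toFun := fun v => ⟨(v : (MonoidAlgebra F G5)ˣ).1 - 1, by
          show ε _ = 0
          rw [map_sub, hεker]; simp⟩
        invFun := fun x => ⟨⟨1 + x.1, 1 + x.1, h1 x, h1 x⟩, by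
          rw [MonoidHom.mem_ker]
          apply Units.ext
          show ε (1 + x.1) = 1
          have : ε x.1 = 0 := x.2
          rw [map_add, this]; simp⟩
        left_inv := fun v => by
          apply Subtype.ext; apply Units.ext
          show 1 + ((v : (MonoidAlgebra F G5)ˣ).1 - 1) = _
          abel
        right_inv := fun x => by
          apply Subtype.ext
          show 1 + x.1 - 1 = x.1
          abel }
    rw [Nat.card_congr e, Module.natCard_eq_pow_finrank (K := F), Nat.card_eq_fintype_card, hF]
    have hrn := LinearMap.finrank_range_add_finrank_ker ε.toLinearMap
    have hsurj : LinearMap.range ε.toLinearMap = ⊤ :=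
      LinearMap.range_eq_top.2 (fun r => ⟨algebraMap F _ r, hεa r⟩)
    have hA : Module.finrank F (MonoidAlgebra F G5) = 32 := by
      have : Module.finrank F (G5 →₀ F) = 32 := by
        rw [Module.finrank_finsupp_self]; rfl
      exact (MonoidAlgebra.coeffLinearEquiv (S := F) (M := G5) F).finrank_eq.trans this
    rw [hsurj, finrank_top, Module.finrank_self, hA] at hrn
    have : Module.finrank F K = 31 := by show Module.finrank F (LinearMap.ker ε.toLinearMap) = 31; omega
    rw [this, ← pow_mul, mul_comm]
  obtain ⟨e2⟩ := elem_ab φ.ker (31 * n) hV2 hcard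
  have hu : Nat.card Fˣ = 2 ^ n - 1 := by
    rw [Nat.card_units, Nat.card_eq_fintype_card, hF]
  let e3 : Fˣ ≃* C (2 ^ n - 1) := mulEquivOfCyclicCardEq (by
    rw [hu]; exact (Nat.card_zmod _).symm)
  exact ⟨e1.trans (MulEquiv.prodCongr e2 e3)⟩
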